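/- arXiv:1205.4889 — 2 statements merged into one kernel-verified Lean document; each statement's English description precedes it below -/
import Mathlib

section
/- Let d ≥ 0, let (σ_i)_{i∈Π} be a Nash equilibrium in the truncated game G^d and let ρ be its outcome. Assume ρ has a prefix αβγ, where β contains at least one vertex, such that Visit(α) = Visit(αβγ), last(α) = last(αβ), |αβ| ≤ l·|V| and |αβγ| = (l+1)·|V| for some l ≥ 1. Let j ∈ Π be such that α does not visit F_j. Then for every history hu of G consistent with (σ_i)_{i≠j} and such that |hu| ≤ |αβ|, the coalition of the players i ≠ j wins the qualitative two-player zero-sum game G_j from the vertex u. -/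
/-- A quantitative multiplayer reachability game: a finite directed graph whose
vertex set is partitioned among the players (via `owner`), with an initial vertex `v0`,
an edge relation `E` such that every vertex has an outgoing edge, and a goal set
`goal i` for each player `i`. -/
structure ReachGame (P : Type) (V : Type) where
  owner : V → P
  v0 : V
  E : V → V → Prop
  total : ∀ v : V, ∃ w : V, E v w
  goal : P → Set V

namespace ReachGame

variable {P V : Type} [DecidableEq P] (G : ReachGame P V)

/-- The last vertex of a history (with default `v0`). -/
def lastV (h : List V) : V := h.getLastD G.v0

/-- A history: a nonempty finite path in the graph starting at `v0`. -/
def IsHistory (h : List V) : Prop :=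
  h ≠ [] ∧ h.head? = some G.v0 ∧ List.Chain' G.E h

/-- A play: an infinite path starting at `v0`. -/
def IsPlay (ρ : ℕ → V) : Prop :=
  ρ 0 = G.v0 ∧ ∀ k : ℕ, G.E (ρ k) (ρ (k + 1))

/-- `σ` is a (total encoding of a) strategy of player `i`: on every history ending in
a vertex owned by `i` it chooses a successor along an edge. -/
def IsStrategy (i : P) (σ : List V → V) : Prop :=
  ∀ h : List V, G.IsHistory h → G.owner (G.lastV h) = i → G.E (G.lastV h) (σ h)

/-- A strategy profile: one strategy per player. -/
def IsProfile (prof : P → List V → V) : Prop :=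
  ∀ i : P, G.IsStrategy i (prof i)

/-- The history of length `n` (i.e. with `n` edges) obtained by letting the players
follow the profile `prof` from `v0`. -/
def outHist (prof : P → List V → V) : ℕ → List V
  | 0 => [G.v0]
  | n + 1 => outHist prof n ++ [prof (G.owner (G.lastV (outHist prof n))) (outHist prof n)]

/-- The outcome play of the strategy profile `prof`. -/
def outcome (prof : P → List V → V) (n : ℕ) : V :=
  G.lastV (G.outHist prof n)

/-- The cost of player `i` for the play `ρ`: the least `l` with `ρ l ∈ goal i`,
and `⊤` (`+∞`) if there is no such `l`. -/
noncomputable def cost (i : P) (ρ : ℕ → V) : ℕ∞ :=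
  sInf {n : ℕ∞ | ∃ l : ℕ, n = (l : ℕ∞) ∧ ρ l ∈ G.goal i}

/-- Nash equilibrium: no player can strictly decrease his cost by a unilateral
deviation. -/
def IsNash (prof : P → List V → V) : Prop :=
  ∀ (j : P) (σ' : List V → V), G.IsStrategy j σ' →
    G.cost j (G.outcome prof) ≤ G.cost j (G.outcome (Function.update prof j σ'))

/-- `h ≈_σ h'` : the strategy `σ` of player `i` behaves the same after `h` and `h'`,
i.e. `σ (h ++ δ) = σ (h' ++ δ)` for every suffix `δ` making both `h ++ δ` and
`h' ++ δ` histories ending in a vertex of player `i`. -/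
def MemEq (i : P) (σ : List V → V) (h h' : List V) : Prop :=
  ∀ δ : List V,
    G.IsHistory (h ++ δ) → G.owner (G.lastV (h ++ δ)) = i →
    G.IsHistory (h' ++ δ) → G.owner (G.lastV (h' ++ δ)) = i →
    σ (h ++ δ) = σ (h' ++ δ)

/-- A strategy of player `i` is finite-memory if the relation `≈_σ` has finitely many
equivalence classes on histories, i.e. there is a finite set of histories meeting
every class. -/
def FiniteMemory (i : P) (σ : List V → V) : Prop :=
  ∃ S : Finset (List V), ∀ h : List V, G.IsHistory h →
    ∃ h' ∈ S, G.IsHistory h' ∧ G.MemEq i σ h h'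

/-- A profile is finite-memory if each of its strategies is. -/
def FiniteMemoryProfile (prof : P → List V → V) : Prop :=
  ∀ i : P, G.FiniteMemory i (prof i)

/-- `Visit h`: the set of players whose goal set is visited by the finite path `h`. -/
def visitL (h : List V) : Set P := {i : P | ∃ v ∈ h, v ∈ G.goal i}

/-- The type of a strategy profile: the set of players whose goal set is visited by
the outcome. -/
def typeOf (prof : P → List V → V) : Set P :=
  {i : P | ∃ l : ℕ, G.outcome prof l ∈ G.goal i}

/-! ### The truncated game `G^d` -/

/-- A strategy of player `i` in the truncated game `G^d` : it chooses a successor on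
every history with less than `d` edges (list length `≤ d`) ending in a vertex of `i`. -/
def IsStrategyTrunc (d : ℕ) (i : P) (σ : List V → V) : Prop :=
  ∀ h : List V, G.IsHistory h → h.length ≤ d → G.owner (G.lastV h) = i →
    G.E (G.lastV h) (σ h)

/-- A strategy profile of the truncated game `G^d`. -/
def IsProfileTrunc (d : ℕ) (prof : P → List V → V) : Prop :=
  ∀ i : P, G.IsStrategyTrunc d i (prof i)

/-- The cost of player `i` for a finite play `h` (a list of vertices): the least
position of `h` lying in `goal i`, and `⊤` if `goal i` is not visited. -/
noncomputable def costList (i : P) (h : List V) : ℕ∞ :=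
  sInf {n : ℕ∞ | ∃ l : ℕ, n = (l : ℕ∞) ∧ l < h.length ∧ h.getD l G.v0 ∈ G.goal i}

/-- Nash equilibrium of the truncated game `G^d` (whose plays are the histories with
exactly `d` edges). -/
def IsNashTrunc (d : ℕ) (prof : P → List V → V) : Prop :=
  ∀ (j : P) (σ' : List V → V), G.IsStrategyTrunc d j σ' →
    G.costList j (G.outHist prof d) ≤
      G.costList j (G.outHist (Function.update prof j σ') d)

/-- The type of a strategy profile of the truncated game `G^d`. -/
def typeOfTrunc (d : ℕ) (prof : P → List V → V) : Set P :=
  G.visitL (G.outHist prof d)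

end ReachGame

/-- The list `ρ₀ … ρ_k` of the first `k + 1` vertices of the infinite path `ρ`. -/
def playPrefix {V : Type} (ρ : ℕ → V) (k : ℕ) : List V := (List.range (k + 1)).map ρ

namespace ReachGame

variable {P V : Type} [DecidableEq P] (G : ReachGame P V)

/-- An infinite path of the graph starting at the vertex `u`. -/
def IsPlayFrom (u : V) (ρ : ℕ → V) : Prop :=
  ρ 0 = u ∧ ∀ k : ℕ, G.E (ρ k) (ρ (k + 1))

/-- In the qualitative two-player zero-sum game `G_j`, the coalition of the players
`i ≠ j` (controlling the vertices not owned by `j`) wins from the vertex `u`: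
it has a strategy such that every play from `u` consistent with this strategy
never visits the goal set `goal j` of player `j`. -/
def CoalitionWins (j : P) (u : V) : Prop :=
  ∃ τ : List V → V,
    (∀ h : List V, h ≠ [] → h.head? = some u → List.Chain' G.E h →
      G.owner (h.getLastD u) ≠ j → G.E (h.getLastD u) (τ h)) ∧
    (∀ ρ : ℕ → V, G.IsPlayFrom u ρ →
      (∀ k : ℕ, G.owner (ρ k) ≠ j → ρ (k + 1) = τ (playPrefix ρ k)) →
      ∀ l : ℕ, ρ l ∉ G.goal j)

/-- The history `h` is consistent with the strategies `prof i` of all the players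
`i ≠ j`: every move of `h` from a vertex not owned by `j` follows `prof`. -/
def ConsistentExcept (prof : P → List V → V) (j : P) (h : List V) : Prop :=
  ∀ k : ℕ, k + 1 < h.length → G.owner (h.getD k G.v0) ≠ j →
    h.getD (k + 1) G.v0 = prof (G.owner (h.getD k G.v0)) (h.take (k + 1))

end ReachGame

/-!
Outside the attractor of `goal j` the coalition can stay outside forever, and on a finite graph the
attractor is reached after at most `|V|` stages. Hence, if the coalition did not win from the last
vertex of `h`, player `j` could deviate by moving along `h`, which the strategies of the other
players allow, and then playing an attractor strategy, so as to visit `goal j` within `|h| + |V|`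
steps. By the equilibrium property the outcome would then visit `goal j` within as many steps,
whereas its prefix `αβγ`, which is at least that long, does not.
-/

theorem isFixedPt_iterate_natCard {α : Type*} [Finite α] {F : Set α → Set α} (hF : Monotone F)
    {S : Set α} (hS : S ⊆ F S) : Function.IsFixedPt F (F^[Nat.card α] S) := by
  have hmono : Monotone fun n ↦ F^[n] S := hF.monotone_iterate_of_le_map hS
  have eq_succ_of_ncard_eq {m : ℕ} (hm : (F^[m] S).ncard = (F^[m + 1] S).ncard) :
      F^[m] S = F^[m + 1] S :=
    Set.eq_of_subset_of_ncard_le (hmono m.le_succ) hm.ge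
  have hncard : (F^[Nat.card α + 1] S).ncard = (F^[Nat.card α] S).ncard :=
    Nat.stabilises_of_monotone (f := fun n ↦ (F^[n] S).ncard)
      (fun _ _ hmn ↦ Set.ncard_le_ncard (hmono hmn)) (fun _ ↦ Set.ncard_le_card _)
      (fun m hm ↦ by
        simp only [Function.iterate_succ_apply' F (m + 1), ← eq_succ_of_ncard_eq hm,
          ← Function.iterate_succ_apply' F m])
      (Nat.le_succ _)
  rw [Function.IsFixedPt, ← Function.iterate_succ_apply' F]
  exact (eq_succ_of_ncard_eq hncard.symm).symm

namespace ReachGame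

section Attractor

variable {P V : Type} (G : ReachGame P V) {j : P} {u v w : V} {S T : Set V}

/-- The controllable predecessor of `S` for player `j`: the vertices from which `j`, against all
the other players, can ensure that the next vertex lies in `S`. -/
def cpre (j : P) (S : Set V) : Set V :=
  {v | (G.owner v = j ∧ ∃ w, G.E v w ∧ w ∈ S) ∨ (G.owner v ≠ j ∧ ∀ w, G.E v w → w ∈ S)}

/-- The `n`-th stage of the attractor of `goal j`: the vertices from which player `j` can force a
visit to his goal set within `n` steps. -/
def attr (j : P) (n : ℕ) : Set V :=
  (fun S ↦ G.goal j ∪ G.cpre j S)^[n] (G.goal j)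

variable {G}

theorem cpre_mono (hST : S ⊆ T) : G.cpre j S ⊆ G.cpre j T := by
  rintro v (⟨hown, w, hvw, hw⟩ | ⟨hown, hsucc⟩)
  · exact .inl ⟨hown, w, hvw, hST hw⟩
  · exact .inr ⟨hown, fun w hvw ↦ hST (hsucc w hvw)⟩

theorem exists_edge_mem_of_mem_cpre (hv : v ∈ G.cpre j S) (hown : G.owner v = j) :
    ∃ w, G.E v w ∧ w ∈ S :=
  hv.elim And.right fun h ↦ absurd hown h.1

theorem mem_of_mem_cpre_of_edge (hv : v ∈ G.cpre j S) (hown : G.owner v ≠ j) (hvw : G.E v w) :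
    w ∈ S :=
  hv.elim (fun h ↦ absurd h.1 hown) fun h ↦ h.2 w hvw

theorem exists_edge_notMem_of_notMem_cpre (hv : v ∉ G.cpre j S) (hown : G.owner v ≠ j) :
    ∃ w, G.E v w ∧ w ∉ S := by
  by_contra! hsucc
  exact hv (.inr ⟨hown, hsucc⟩)

theorem notMem_of_notMem_cpre_of_edge (hv : v ∉ G.cpre j S) (hown : G.owner v = j)
    (hvw : G.E v w) : w ∉ S :=
  fun hw ↦ hv (.inl ⟨hown, w, hvw, hw⟩)

variable (G)

theorem monotone_goal_union_cpre (j : P) : Monotone fun S ↦ G.goal j ∪ G.cpre j S :=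
  fun _ _ hST ↦ Set.union_subset_union_right _ (cpre_mono hST)

theorem attr_succ (j : P) (n : ℕ) : G.attr j (n + 1) = G.goal j ∪ G.cpre j (G.attr j n) :=
  Function.iterate_succ_apply' _ n _

theorem attr_mono (j : P) : Monotone (G.attr j) :=
  (G.monotone_goal_union_cpre j).monotone_iterate_of_le_map Set.subset_union_left

theorem goal_union_cpre_attr_natCard [Finite V] (j : P) :
    G.goal j ∪ G.cpre j (G.attr j (Nat.card V)) = G.attr j (Nat.card V) :=
  isFixedPt_iterate_natCard (G.monotone_goal_union_cpre j) Set.subset_union_left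

/-- A positional move function `f` along the edges of `G` that is an attractor strategy of player
`j`: at each vertex of `j` outside `goal j`, it decreases every bound on the attractor rank. -/
def IsAttracting (j : P) (f : V → V) : Prop :=
  ∀ v, G.E v (f v) ∧ (G.owner v = j → v ∉ G.goal j →
    ∀ n, v ∈ G.attr j (n + 1) → f v ∈ G.attr j n)

theorem exists_isAttracting (j : P) : ∃ f, G.IsAttracting j f := by
  classical
  suffices ∀ v, ∃ w, G.E v w ∧ (G.owner v = j → v ∉ G.goal j →
      ∀ n, v ∈ G.attr j (n + 1) → w ∈ G.attr j n) from
    ⟨_, fun v ↦ (this v).choose_spec⟩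
  intro v
  by_cases hrank : G.owner v = j ∧ v ∉ G.goal j ∧ ∃ n, v ∈ G.attr j (n + 1)
  · obtain ⟨hown, hgoal, hex⟩ := hrank
    -- The move is chosen at the least rank, so that it serves all larger ranks by monotonicity.
    have hmem := Nat.find_spec hex
    rw [attr_succ] at hmem
    obtain ⟨w, hvw, hw⟩ := exists_edge_mem_of_mem_cpre (hmem.resolve_left hgoal) hown
    exact ⟨w, hvw, fun _ _ n hn ↦ G.attr_mono j (Nat.find_min' hex hn) hw⟩
  · obtain ⟨w, hvw⟩ := G.total v
    exact ⟨w, hvw, fun hown hgoal n hn ↦ absurd ⟨hown, hgoal, n, hn⟩ hrank⟩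

variable {G}

theorem coalitionWins_of_cpre_subset (hgoal : G.goal j ⊆ S) (hcpre : G.cpre j S ⊆ S)
    (hu : u ∉ S) : G.CoalitionWins j u := by
  have hmove : ∀ v, ∃ w, G.E v w ∧ (v ∉ S → G.owner v ≠ j → w ∉ S) := by
    intro v
    by_cases hv : v ∉ S ∧ G.owner v ≠ j
    · obtain ⟨w, hvw, hw⟩ := exists_edge_notMem_of_notMem_cpre (fun h ↦ hv.1 (hcpre h)) hv.2
      exact ⟨w, hvw, fun _ _ ↦ hw⟩
    · obtain ⟨w, hvw⟩ := G.total v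
      exact ⟨w, hvw, fun hvS hown ↦ absurd ⟨hvS, hown⟩ hv⟩
  choose f hedge havoid using hmove
  refine ⟨fun h ↦ f (h.getLastD u), fun h _ _ _ _ ↦ hedge _, fun ρ hρ hcons ↦ ?_⟩
  have hnotMem : ∀ k, ρ k ∉ S := by
    intro k
    induction k with
    | zero => exact hρ.1 ▸ hu
    | succ k ih =>
      by_cases hown : G.owner (ρ k) = j
      · exact notMem_of_notMem_cpre_of_edge (fun h ↦ ih (hcpre h)) hown (hρ.2 k)
      · have hnext : ρ (k + 1) = f (ρ k) := by
          simpa [playPrefix, List.range_succ] using hcons k hown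
        exact hnext ▸ havoid _ ih hown
  exact fun k hk ↦ hnotMem k (hgoal hk)

theorem coalitionWins_of_notMem_attr [Finite V] (hu : u ∉ G.attr j (Nat.card V)) :
    G.CoalitionWins j u :=
  have hfix := (G.goal_union_cpre_attr_natCard j).subset
  coalitionWins_of_cpre_subset (Set.subset_union_left.trans hfix)
    (Set.subset_union_right.trans hfix) hu

end Attractor

section Histories

variable {P V : Type} {G : ReachGame P V} {i : P} {g h t : List V} {w : V}

theorem getLast?_eq_some_lastV (hne : h ≠ []) : h.getLast? = some (G.lastV h) := by
  rw [lastV, List.getLastD_eq_getLast?, List.getLast?_eq_some_getLast hne, Option.getD_some]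

@[simp]
theorem lastV_concat : G.lastV (h ++ [w]) = w := by
  simp [lastV]

theorem lastV_take_succ {k : ℕ} (hk : k < h.length) :
    G.lastV (h.take (k + 1)) = h.getD k G.v0 := by
  rw [List.take_succ_eq_append_getElem hk, lastV_concat, List.getD_eq_getElem _ _ hk]

theorem IsHistory.concat (hh : G.IsHistory h) (hw : G.E (G.lastV h) w) :
    G.IsHistory (h ++ [w]) := by
  obtain ⟨hne, hhead, hchain⟩ := hh
  refine ⟨by simp, by simp [hhead], hchain.append (List.isChain_singleton w) ?_⟩
  simpa [getLast?_eq_some_lastV (G := G) hne] using hw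

theorem IsHistory.edge_of_append_cons (hh : G.IsHistory (g ++ w :: t)) (hne : g ≠ []) :
    G.E (G.lastV g) w :=
  (List.isChain_append.1 hh.2.2).2.2 _ (getLast?_eq_some_lastV hne) _ rfl

theorem visitL_mono (hgh : g ⊆ h) : G.visitL g ⊆ G.visitL h :=
  fun _ ⟨v, hv, hgoal⟩ ↦ ⟨v, hgh hv, hgoal⟩

theorem mem_visitL_of_lastV_mem_goal (hne : h ≠ []) (hgoal : G.lastV h ∈ G.goal i) :
    i ∈ G.visitL h :=
  ⟨_, List.mem_of_getLast? (getLast?_eq_some_lastV hne), hgoal⟩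

theorem costList_le_natCast_iff {k : ℕ} :
    G.costList i h ≤ k ↔ i ∈ G.visitL (h.take (k + 1)) := by
  rw [← ENat.lt_add_one_iff (ENat.natCast_ne_top k), costList, sInf_lt_iff]
  constructor
  · rintro ⟨_, ⟨l, rfl, hl, hgoal⟩, hlk⟩
    have hlk : l < k + 1 := by exact_mod_cast hlk
    rw [List.getD_eq_getElem _ _ hl] at hgoal
    exact ⟨h[l], List.mem_take_iff_getElem.2 ⟨l, by lia, rfl⟩, hgoal⟩
  · rintro ⟨v, hv, hgoal⟩
    obtain ⟨l, hl, rfl⟩ := List.mem_take_iff_getElem.1 hv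
    refine ⟨l, ⟨l, rfl, by lia, ?_⟩, by exact_mod_cast (by lia : l < k + 1)⟩
    rwa [List.getD_eq_getElem _ _ (by lia)]

end Histories

section Outcomes

variable {P V : Type} {G : ReachGame P V} {prof : P → List V → V} {d m n k : ℕ}
  {j : P} {h : List V}

@[simp]
theorem length_outHist : (G.outHist prof n).length = n + 1 := by
  induction n with
  | zero => rfl
  | succ n ih => simp [outHist, ih]

theorem outHist_ne_nil : G.outHist prof n ≠ [] :=
  List.ne_nil_of_length_eq_add_one length_outHist

theorem outHist_prefix (hmn : m ≤ n) : G.outHist prof m <+: G.outHist prof n := by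
  induction n, hmn using Nat.le_induction with
  | base => exact List.prefix_rfl
  | succ n _ ih => exact ih.trans (List.prefix_append _ _)

theorem take_outHist (hmn : m ≤ n) : (G.outHist prof n).take (m + 1) = G.outHist prof m := by
  simpa using (List.prefix_iff_eq_take.1 (outHist_prefix (G := G) (prof := prof) hmn)).symm

theorem IsProfileTrunc.isHistory_outHist (hprof : G.IsProfileTrunc d prof) (hn : n ≤ d) :
    G.IsHistory (G.outHist prof n) := by
  induction n with
  | zero => exact ⟨outHist_ne_nil, rfl, List.isChain_singleton _⟩
  | succ n ih =>
    have hhist := ih (by lia)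
    exact hhist.concat (hprof _ _ hhist (by simpa using hn) rfl)

theorem IsProfileTrunc.edge_lastV_outHist_succ (hprof : G.IsProfileTrunc d prof) (hn : n < d) :
    G.E (G.lastV (G.outHist prof n)) (G.lastV (G.outHist prof (n + 1))) := by
  rw [outHist, lastV_concat]
  exact hprof _ _ (hprof.isHistory_outHist hn.le) (by simpa using hn) rfl

theorem IsHistory.outHist_eq_take (hh : G.IsHistory h)
    (hfollow : ∀ k, k + 1 < h.length →
      h.getD (k + 1) G.v0 = prof (G.owner (h.getD k G.v0)) (h.take (k + 1)))
    (hk : k < h.length) : G.outHist prof k = h.take (k + 1) := by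
  induction k with
  | zero =>
    obtain ⟨-, hhead, -⟩ := hh
    rw [List.take_one, hhead]
    rfl
  | succ k ih =>
    have hklt : k < h.length := by lia
    rw [outHist, ih hklt, lastV_take_succ hklt, ← hfollow k hk, List.getD_eq_getElem _ _ hk,
      ← List.take_succ_eq_append_getElem hk]

theorem IsProfileTrunc.mem_visitL_outHist_of_mem_attr (hprof : G.IsProfileTrunc d prof)
    {f : V → V} (hf : G.IsAttracting j f)
    (hfollow : ∀ g : List V, m < g.length → prof j g = f (G.lastV g))
    (hattr : G.lastV (G.outHist prof m) ∈ G.attr j n) (hd : m + n ≤ d) :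
    j ∈ G.visitL (G.outHist prof (m + n)) := by
  induction n generalizing m with
  | zero => exact mem_visitL_of_lastV_mem_goal outHist_ne_nil hattr
  | succ n ih =>
    by_cases hgoal : G.lastV (G.outHist prof m) ∈ G.goal j
    · exact visitL_mono (outHist_prefix (by lia)).subset
        (mem_visitL_of_lastV_mem_goal outHist_ne_nil hgoal)
    have hnext : G.lastV (G.outHist prof (m + 1)) ∈ G.attr j n := by
      by_cases hown : G.owner (G.lastV (G.outHist prof m)) = j
      · rw [outHist, lastV_concat, hown, hfollow _ (by simp)]
        exact (hf _).2 hown hgoal n hattr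
      · rw [attr_succ] at hattr
        exact mem_of_mem_cpre_of_edge (hattr.resolve_left hgoal) hown
          (hprof.edge_lastV_outHist_succ (by lia))
    rw [← Nat.succ_add_eq_add_succ m n]
    exact ih (fun g hg ↦ hfollow g (by lia)) hnext (by lia)

end Outcomes

section Deviations

variable {P V : Type} {G : ReachGame P V} {prof : P → List V → V} {d k n : ℕ} {j : P}
  {f : V → V} {g h : List V}

open Classical in
variable (G) in
/-- The strategy that moves along the history `h` as long as the current history is a proper
prefix of `h`, and makes the positional move `f` from then on or once `h` has been left. At `h`
itself, `List.getD` is out of range and returns the move of `f`. -/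
noncomputable def followThen (h : List V) (f : V → V) (g : List V) : V :=
  if g <+: h then h.getD g.length (f (G.lastV g)) else f (G.lastV g)

theorem followThen_take (hk : k < h.length) : G.followThen h f (h.take k) = h.getD k G.v0 := by
  rw [followThen, if_pos (List.take_prefix k h), List.length_take_of_le hk.le,
    List.getD_eq_getElem _ _ hk, List.getD_eq_getElem _ _ hk]

theorem followThen_of_length_le (hgh : h.length ≤ g.length) :
    G.followThen h f g = f (G.lastV g) := by
  rw [followThen, List.getD_eq_default _ _ hgh, ite_self]

theorem IsHistory.isStrategy_followThen (hh : G.IsHistory h) (hf : ∀ v, G.E v (f v)) :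
    G.IsStrategy j (G.followThen h f) := by
  intro g hg _
  by_cases hprefix : g <+: h
  · obtain ⟨t, rfl⟩ := hprefix
    cases t with
    | nil => simpa [followThen] using hf _
    | cons w t => simpa [followThen] using hh.edge_of_append_cons hg.1
  · simpa [followThen, hprefix] using hf _

variable [DecidableEq P]

theorem IsProfileTrunc.update {σ : List V → V} (hprof : G.IsProfileTrunc d prof)
    (hσ : G.IsStrategyTrunc d j σ) : G.IsProfileTrunc d (Function.update prof j σ) :=
  (Function.forall_update_iff prof (G.IsStrategyTrunc d)).2 ⟨hσ, fun i _ ↦ hprof i⟩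

theorem ConsistentExcept.outHist_update_followThen (hh : G.IsHistory h)
    (hcons : G.ConsistentExcept prof j h) :
    G.outHist (Function.update prof j (G.followThen h f)) (h.length - 1) = h := by
  have hpos : 0 < h.length := List.length_pos_iff.2 hh.1
  rw [hh.outHist_eq_take (fun k hk ↦ ?_) (by lia), List.take_of_length_le (by lia)]
  by_cases hown : G.owner (h.getD k G.v0) = j
  · rw [hown, Function.update_self, followThen_take hk]
  · rw [Function.update_of_ne hown]
    exact hcons k hk hown

theorem exists_deviation_mem_visitL (hprof : G.IsProfileTrunc d prof) (hh : G.IsHistory h)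
    (hcons : G.ConsistentExcept prof j h) (hattr : G.lastV h ∈ G.attr j n)
    (hd : h.length - 1 + n ≤ d) :
    ∃ σ, G.IsStrategyTrunc d j σ ∧
      j ∈ G.visitL (G.outHist (Function.update prof j σ) (h.length - 1 + n)) := by
  obtain ⟨f, hf⟩ := G.exists_isAttracting j
  have hstrat : G.IsStrategyTrunc d j (G.followThen h f) :=
    fun g hg _ ↦ hh.isStrategy_followThen (fun v ↦ (hf v).1) g hg
  refine ⟨_, hstrat, (hprof.update hstrat).mem_visitL_outHist_of_mem_attr hf ?_ ?_ hd⟩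
  · intro g hg
    rw [Function.update_self, followThen_of_length_le (by lia)]
  · rwa [hcons.outHist_update_followThen hh]

theorem IsNashTrunc.mem_visitL_of_update (hnash : G.IsNashTrunc d prof) {σ : List V → V}
    (hσ : G.IsStrategyTrunc d j σ) (hk : k ≤ d)
    (hvisit : j ∈ G.visitL (G.outHist (Function.update prof j σ) k)) :
    j ∈ G.visitL (G.outHist prof k) := by
  rw [← take_outHist hk, ← costList_le_natCast_iff] at hvisit ⊢
  exact (hnash j σ hσ).trans hvisit

end Deviations

end ReachGame

theorem coalition_wins_after_deviation_general {P V : Type} [DecidableEq P] [Finite V]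
    {G : ReachGame P V} {d : ℕ} {prof : P → List V → V}
    (hprof : G.IsProfileTrunc d prof) (hnash : G.IsNashTrunc d prof)
    {π : List V} (hπ : π <+: G.outHist prof d) {j : P} (hj : j ∉ G.visitL π)
    {h : List V} (hh : G.IsHistory h) (hcons : G.ConsistentExcept prof j h)
    (hlen : h.length + Nat.card V ≤ π.length) :
    G.CoalitionWins j (G.lastV h) := by
  by_contra hlose
  have hattr : G.lastV h ∈ G.attr j (Nat.card V) :=
    not_imp_comm.1 ReachGame.coalitionWins_of_notMem_attr hlose
  have hpos : 0 < h.length := List.length_pos_iff.2 hh.1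
  have hπd : π.length ≤ d + 1 := by simpa using hπ.length_le
  have hd : h.length - 1 + Nat.card V ≤ d := by lia
  obtain ⟨σ, hσ, hdev⟩ := ReachGame.exists_deviation_mem_visitL hprof hh hcons hattr hd
  have hprefix : G.outHist prof (h.length - 1 + Nat.card V) <+: π :=
    List.prefix_of_prefix_length_le (ReachGame.outHist_prefix hd) hπ
      (by rw [ReachGame.length_outHist]; lia)
  exact hj (ReachGame.visitL_mono hprefix.subset (hnash.mem_visitL_of_update hσ hd hdev))

/-- Let `(σᵢ)` be a Nash equilibrium of the truncated game `G^d` whose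
outcome has a prefix `αβγ` (with `β` nonempty) such that `Visit(α) = Visit(αβγ)`,
`last(α) = last(αβ)`, `|αβ| ≤ l·|V|` and `|αβγ| = (l+1)·|V|` for some `l ≥ 1`
(lengths counted in edges).  Let `j` be a player such that `α` does not visit `F_j`.
Then for every history `h` of `G` consistent with the strategies of the players `i ≠ j`
and with `|h| ≤ |αβ|`, the coalition of the players `i ≠ j` wins the qualitative
two-player zero-sum game `G_j` from the last vertex of `h`. -/
theorem coalition_wins_after_deviation {P V : Type} [Fintype P] [DecidableEq P] [Fintype V]
    (G : ReachGame P V) (d : ℕ)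
    (prof : P → List V → V)
    (hprof : G.IsProfileTrunc d prof) (hnash : G.IsNashTrunc d prof)
    (α β γ rest : List V) (hα : α ≠ []) (hβ : β ≠ [])
    (hdecomp : G.outHist prof d = α ++ β ++ γ ++ rest)
    (hvisit : G.visitL α = G.visitL (α ++ β ++ γ))
    (hlast : G.lastV α = G.lastV (α ++ β))
    (l : ℕ) (hl : 1 ≤ l)
    (hlen1 : (α ++ β).length - 1 ≤ l * Fintype.card V)
    (hlen2 : (α ++ β ++ γ).length - 1 = (l + 1) * Fintype.card V)
    (j : P) (hj : j ∉ G.visitL α)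
    (h : List V) (hh : G.IsHistory h)
    (hcons : G.ConsistentExcept prof j h)
    (hhlen : h.length - 1 ≤ (α ++ β).length - 1) :
    G.CoalitionWins j (G.lastV h) := by
  have hpos : 0 < (α ++ β ++ γ).length := List.length_pos_iff.2 (by simp [hα])
  rw [← Nat.card_eq_fintype_card] at hlen1 hlen2
  exact coalition_wins_after_deviation_general hprof hnash ⟨rest, hdecomp.symm⟩ (hvisit ▸ hj) hh
    hcons (by lia)
end

section
/- Let (σ_i)_{i∈Π} be a Nash equilibrium in a quantitative multiplayer reachability game G. Then there exists a Nash equilibrium (τ_i)_{i∈Π} of the same type whose outcome is of the form αβ^ω, where Visit(α) equals the type of (σ_i)_{i∈Π} and |αβ| < (|Π|+1)·|V|. -/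
/-!
Call a play *unimprovable* if no player can, from any of its vertices, force a visit to his goal
earlier than the play makes one. Outcomes of Nash equilibria are unimprovable, since a player may
follow the outcome and then switch to a forcing strategy. Conversely an unimprovable play is the
outcome of the equilibrium in which everybody follows it and, after a first deviation, everybody
punishes the deviator by delaying him as long as possible.

Removing from an unimprovable play a cycle during which no player reaches his goal for the first
time delays nobody, and leaves the play unimprovable. Hence, in an unimprovable play of the given
type with the earliest possible date `N` of the last first visit, no such cycle is left before `N`:
the pairs (number of goals visited so far, current vertex) are distinct and `N < |Π|·|V|`.
After `N`, at most `|V|` further steps close a cycle, which is then repeated forever.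
-/

namespace ReachGame

variable {P V : Type} (G : ReachGame P V)

/-! ### Plays, prefixes and outcomes -/

/-- The finite path formed by the first `n` edges, that is the first `n + 1` vertices, of the
sequence `ρ`. -/
def playPrefix (ρ : ℕ → V) (n : ℕ) : List V :=
  (List.range (n + 1)).map ρ

@[simp]
theorem length_playPrefix (ρ : ℕ → V) (n : ℕ) : (playPrefix ρ n).length = n + 1 := by
  simp [playPrefix]

@[simp]
theorem lastV_playPrefix (ρ : ℕ → V) (n : ℕ) : G.lastV (playPrefix ρ n) = ρ n := by
  simp [lastV, playPrefix, List.range_succ]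

theorem getElem?_playPrefix_of_le (ρ : ℕ → V) {d n : ℕ} (h : d ≤ n) :
    (playPrefix ρ n)[d]? = some (ρ d) := by
  simp [playPrefix, Nat.lt_succ_of_le h]

theorem isHistory_playPrefix {ρ : ℕ → V} {n : ℕ} (h0 : ρ 0 = G.v0)
    (hE : ∀ k < n, G.E (ρ k) (ρ (k + 1))) : G.IsHistory (playPrefix ρ n) := by
  refine ⟨by simp [playPrefix], by simp [playPrefix, List.range_succ_eq_map, h0], ?_⟩
  refine List.isChain_iff_getElem.2 fun k hk => ?_
  simpa [playPrefix] using hE k (by simpa [playPrefix] using hk)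

theorem outcome_zero (prof : P → List V → V) : G.outcome prof 0 = G.v0 := by
  simp [outcome, outHist, lastV]

theorem outHist_eq_playPrefix (prof : P → List V → V) (n : ℕ) :
    G.outHist prof n = playPrefix (G.outcome prof) n := by
  induction n with
  | zero => simp [outHist, playPrefix, outcome_zero]
  | succ n ih =>
    rw [playPrefix, List.range_succ, List.map_append, ← playPrefix, ← ih]
    simp [outHist, outcome, lastV]

theorem outcome_succ (prof : P → List V → V) (n : ℕ) :
    G.outcome prof (n + 1) =
      prof (G.owner (G.outcome prof n)) (playPrefix (G.outcome prof) n) := by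
  rw [← outHist_eq_playPrefix]
  simp [outcome, outHist, lastV]

theorem isPlay_outcome {prof : P → List V → V} (hprof : G.IsProfile prof) :
    G.IsPlay (G.outcome prof) := by
  refine ⟨G.outcome_zero prof, fun k => ?_⟩
  induction k using Nat.strong_induction_on with
  | _ k ih =>
    have hhist := G.isHistory_playPrefix (G.outcome_zero prof) ih
    simpa [outcome_succ] using hprof (G.owner (G.outcome prof k)) _ hhist (by simp)

theorem outcome_eq_of_forall_lt {prof : P → List V → V} {ρ : ℕ → V} {n : ℕ} (h0 : ρ 0 = G.v0)
    (hstep : ∀ k < n, prof (G.owner (ρ k)) (playPrefix ρ k) = ρ (k + 1)) :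
    ∀ k ≤ n, G.outcome prof k = ρ k := by
  intro k
  induction k using Nat.strong_induction_on with
  | _ k ih =>
    intro hk
    cases k with
    | zero => rw [outcome_zero, h0]
    | succ k =>
      have hagree : ∀ i ≤ k, G.outcome prof i = ρ i := fun i hi => ih i (by lia) (by lia)
      have hinit : playPrefix (G.outcome prof) k = playPrefix ρ k :=
        List.map_congr_left fun i hi => hagree i (Nat.le_of_lt_succ (List.mem_range.1 hi))
      rw [outcome_succ, hagree k le_rfl, hinit, hstep k hk]

theorem isProfile_update [DecidableEq P] {prof : P → List V → V} (hprof : G.IsProfile prof)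
    {j : P} {σ : List V → V} (hσ : G.IsStrategy j σ) : G.IsProfile (Function.update prof j σ) :=
  (Function.forall_update_iff prof G.IsStrategy).2 ⟨hσ, fun i _ => hprof i⟩

/-! ### Visited goals and costs -/

/-- The players whose goal set is visited by the sequence `ρ`. -/
def visited (ρ : ℕ → V) : Set P :=
  {j | ∃ l, ρ l ∈ G.goal j}

/-- The players whose goal set is visited by the sequence `ρ` at time at most `n`, that is the
players whose cost is at most `n`. -/
def visitedBy (ρ : ℕ → V) (n : ℕ) : Set P :=
  {j | ∃ l ≤ n, ρ l ∈ G.goal j}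

theorem visitedBy_mono (ρ : ℕ → V) : Monotone (G.visitedBy ρ) :=
  fun _ _ hmn _ ⟨l, hl, hgoal⟩ => ⟨l, hl.trans hmn, hgoal⟩

theorem visitedBy_subset_visited (ρ : ℕ → V) (n : ℕ) : G.visitedBy ρ n ⊆ G.visited ρ :=
  fun _ ⟨l, _, hgoal⟩ => ⟨l, hgoal⟩

theorem visitL_playPrefix (ρ : ℕ → V) (n : ℕ) :
    G.visitL (playPrefix ρ n) = G.visitedBy ρ n := by
  simp [visitL, visitedBy, playPrefix]

theorem exists_visitedBy_eq_visited [Finite P] (ρ : ℕ → V) :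
    ∃ N, G.visitedBy ρ N = G.visited ρ := by
  obtain ⟨N, hN⟩ := WellFoundedGT.monotone_chain_condition ⟨G.visitedBy ρ, G.visitedBy_mono ρ⟩
  refine ⟨N, (G.visitedBy_subset_visited ρ N).antisymm fun j ⟨l, hgoal⟩ => ?_⟩
  have hmax : G.visitedBy ρ N = G.visitedBy ρ (max N l) := hN _ (le_max_left N l)
  exact hmax ▸ ⟨l, le_max_right N l, hgoal⟩

theorem cost_le_coe_iff {j : P} {ρ : ℕ → V} {n : ℕ} :
    G.cost j ρ ≤ n ↔ j ∈ G.visitedBy ρ n := by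
  constructor
  · intro hle
    have hlt : G.cost j ρ < n + 1 := (ENat.lt_add_one_iff (ENat.natCast_ne_top n)).2 hle
    obtain ⟨_, ⟨l, rfl, hgoal⟩, hl⟩ := sInf_lt_iff.1 hlt
    exact ⟨l, Nat.le_of_lt_succ (by exact_mod_cast hl), hgoal⟩
  · rintro ⟨l, hl, hgoal⟩
    have hle : G.cost j ρ ≤ l := sInf_le ⟨l, rfl, hgoal⟩
    exact hle.trans (by exact_mod_cast hl)

theorem cost_le_cost_iff {j : P} {ρ π : ℕ → V} :
    G.cost j ρ ≤ G.cost j π ↔ ∀ n, j ∈ G.visitedBy π n → j ∈ G.visitedBy ρ n := by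
  simp only [← cost_le_coe_iff]
  refine ⟨fun h n hn => h.trans hn, fun h => ?_⟩
  cases hcost : G.cost j π with
  | top => exact le_top
  | coe n => exact h n hcost.le

/-! ### Attractors -/

/-- The vertices from which player `j` can force a visit to his goal set within `n` steps,
whatever the other players do. -/
def attractor (j : P) : ℕ → Set V
  | 0 => G.goal j
  | n + 1 => {v | v ∈ G.goal j ∨ (G.owner v = j ∧ ∃ w, G.E v w ∧ w ∈ attractor j n) ∨
      (G.owner v ≠ j ∧ ∀ w, G.E v w → w ∈ attractor j n)}

theorem attractor_mono (j : P) : Monotone (G.attractor j) := by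
  refine monotone_nat_of_le_succ fun n => ?_
  induction n with
  | zero => exact fun v hv => Or.inl hv
  | succ n ih =>
    rintro v (hv | ⟨howner, w, hE, hw⟩ | ⟨howner, hall⟩)
    · exact Or.inl hv
    · exact Or.inr (Or.inl ⟨howner, w, hE, ih hw⟩)
    · exact Or.inr (Or.inr ⟨howner, fun w hE => ih (hall w hE)⟩)

theorem exists_edge_mem_attractor (j : P) (n : ℕ) (v : V) :
    ∃ w, G.E v w ∧ ((∃ u, G.E v u ∧ u ∈ G.attractor j n) → w ∈ G.attractor j n) := by
  by_cases h : ∃ u, G.E v u ∧ u ∈ G.attractor j n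
  · obtain ⟨w, hE, hw⟩ := h
    exact ⟨w, hE, fun _ => hw⟩
  · obtain ⟨w, hE⟩ := G.total v
    exact ⟨w, hE, fun h' => absurd h' h⟩

theorem mem_visitedBy_of_mem_attractor {j : P} {π : ℕ → V} (hE : ∀ i, G.E (π i) (π (i + 1)))
    {k n : ℕ} (hk : π k ∈ G.attractor j n)
    (hforce : ∀ i ≥ k, G.owner (π i) = j →
      (∃ w, G.E (π i) w ∧ w ∈ G.attractor j (k + n - (i + 1))) →
        π (i + 1) ∈ G.attractor j (k + n - (i + 1))) :
    j ∈ G.visitedBy π (k + n) := by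
  induction n generalizing k with
  | zero => exact ⟨k, le_rfl, hk⟩
  | succ n ih =>
    have hdeadline : k + (n + 1) = k + 1 + n := by lia
    rw [hdeadline] at hforce ⊢
    have hnext (h : π (k + 1) ∈ G.attractor j n) : j ∈ G.visitedBy π (k + 1 + n) :=
      ih h fun i hi => hforce i (by lia)
    rcases hk with hgoal | ⟨howner, hmove⟩ | ⟨-, hall⟩
    · exact ⟨k, by lia, hgoal⟩
    · exact hnext (by simpa using hforce k le_rfl howner (by simpa using hmove))
    · exact hnext (hall _ (hE k))

theorem exists_edge_forall_mem_attractor_succ (j : P) {v : V} (hfin : {w | G.E v w}.Finite) :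
    ∃ w, G.E v w ∧ ∀ n, w ∈ G.attractor j n → v ∈ G.attractor j (n + 1) := by
  by_cases howner : G.owner v = j
  · obtain ⟨w, hE⟩ := G.total v
    exact ⟨w, hE, fun n hw => Or.inr (Or.inl ⟨howner, w, hE, hw⟩)⟩
  by_contra! hcon
  choose! date hmem hnot using hcon
  obtain ⟨w, hE, hmax⟩ := hfin.exists_maximalFor date _ (G.total v)
  refine hnot w hE (Or.inr (Or.inr ⟨howner, fun u hu => ?_⟩))
  have hdate : date u ≤ date w := (le_total (date u) (date w)).elim id (hmax hu)
  exact G.attractor_mono j hdate (hmem u hu)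

theorem mem_attractor_of_mem_goal_add {j : P} {π : ℕ → V} {c n : ℕ}
    (hback : ∀ i ≥ c, ∀ m, π (i + 1) ∈ G.attractor j m → π i ∈ G.attractor j (m + 1))
    (hgoal : π (c + n) ∈ G.goal j) : π c ∈ G.attractor j n := by
  induction n generalizing c with
  | zero => exact hgoal
  | succ n ih =>
    refine hback c le_rfl n (ih (fun i hi => hback i (by lia)) ?_)
    rwa [add_right_comm]

/-! ### Outcomes of Nash equilibria are the unimprovable plays -/

/-- An unimprovable play: whenever a player can force a visit to his goal set within `n` steps from
the vertex reached at time `k`, the play itself visits it by time `k + n`. -/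
structure IsUnimprovable (ρ : ℕ → V) : Prop where
  isPlay : G.IsPlay ρ
  mem_visitedBy : ∀ j k n, ρ k ∈ G.attractor j n → j ∈ G.visitedBy ρ (k + n)

variable {G}

theorem IsNash.isUnimprovable_outcome [DecidableEq P] {prof : P → List V → V}
    (hprof : G.IsProfile prof) (hnash : G.IsNash prof) : G.IsUnimprovable (G.outcome prof) := by
  refine ⟨G.isPlay_outcome hprof, fun j k n hk => ?_⟩
  choose move hmove hattr using G.exists_edge_mem_attractor j
  let σ : List V → V := fun h =>
    if h.length ≤ k then prof j h else move (k + n - h.length) (G.lastV h)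
  have hσ : G.IsStrategy j σ := by
    intro h hhist howner
    by_cases hlen : h.length ≤ k
    · simpa only [σ, if_pos hlen] using hprof j h hhist howner
    · simpa only [σ, if_neg hlen] using hmove _ _
  set π := G.outcome (Function.update prof j σ) with hπ
  have hagree : π k = G.outcome prof k := by
    refine G.outcome_eq_of_forall_lt (G.outcome_zero prof) (fun i hi => ?_) k le_rfl
    rw [outcome_succ]
    by_cases howner : G.owner (G.outcome prof i) = j
    · have hlen : (playPrefix (G.outcome prof) i).length ≤ k := by simpa using hi
      simp only [howner, Function.update_self, σ, if_pos hlen]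
    · rw [Function.update_of_ne howner]
  have hforce : ∀ i ≥ k, G.owner (π i) = j →
      π (i + 1) = move (k + n - (i + 1)) (π i) := by
    intro i hi howner
    have hlen : ¬ i + 1 ≤ k := by lia
    rw [hπ, outcome_succ, ← hπ, howner]
    simp only [Function.update_self, σ, length_playPrefix, if_neg hlen, lastV_playPrefix]
  have hvisit : j ∈ G.visitedBy π (k + n) := by
    refine G.mem_visitedBy_of_mem_attractor (π := π)
      (G.isPlay_outcome (G.isProfile_update hprof hσ)).2 (hagree ▸ hk)
      fun i hi howner hexists => ?_
    rw [hforce i hi howner]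
    exact hattr _ _ hexists
  exact G.cost_le_cost_iff.1 (hnash j σ hσ) _ hvisit

open Classical in
/-- The first position at which the finite path `h` differs from `ρ`; it is `h.length` when `h` is a
prefix of `ρ`. -/
noncomputable def firstDeviation (ρ : ℕ → V) (h : List V) : ℕ :=
  Nat.find (p := fun d => h[d]? ≠ some (ρ d)) ⟨h.length, by simp⟩

theorem firstDeviation_eq_iff {ρ : ℕ → V} {h : List V} {d : ℕ} :
    firstDeviation ρ h = d ↔ h[d]? ≠ some (ρ d) ∧ ∀ e < d, h[e]? = some (ρ e) := by
  classical
  simp [firstDeviation, Nat.find_eq_iff]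

variable (G) in
/-- The strategy, common to all players, that follows `ρ` and, once some player has left it, plays
the move `punish j v` against that player `j` at the current vertex `v`. The deviator owns the last
vertex before the first deviation. -/
noncomputable def retaliation (ρ : ℕ → V) (punish : P → V → V) (h : List V) : V :=
  if firstDeviation ρ h = h.length then ρ h.length
  else punish (G.owner (ρ (firstDeviation ρ h - 1))) (G.lastV h)

theorem retaliation_playPrefix_of_agree {ρ π : ℕ → V} {punish : P → V → V} {n : ℕ}
    (hagree : ∀ d ≤ n, π d = ρ d) : G.retaliation ρ punish (playPrefix π n) = ρ (n + 1) := by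
  have hfirst : firstDeviation ρ (playPrefix π n) = n + 1 := by
    refine firstDeviation_eq_iff.2 ⟨by simp [playPrefix], fun e he => ?_⟩
    rw [getElem?_playPrefix_of_le π (by lia), hagree e (by lia)]
  simp [retaliation, hfirst]

theorem retaliation_playPrefix_of_ne {ρ π : ℕ → V} {punish : P → V → V} {c n : ℕ} (hcn : c < n)
    (hagree : ∀ d ≤ c, π d = ρ d) (hne : π (c + 1) ≠ ρ (c + 1)) :
    G.retaliation ρ punish (playPrefix π n) = punish (G.owner (ρ c)) (π n) := by
  have hfirst : firstDeviation ρ (playPrefix π n) = c + 1 := by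
    refine firstDeviation_eq_iff.2 ⟨?_, fun e he => ?_⟩
    · rw [getElem?_playPrefix_of_le π hcn]
      simpa using hne
    · rw [getElem?_playPrefix_of_le π (by lia), hagree e (by lia)]
  simp [retaliation, hfirst, hcn.ne]

theorem isProfile_retaliation {ρ : ℕ → V} {punish : P → V → V} (hρ : G.IsPlay ρ)
    (hpunish : ∀ j v, G.E v (punish j v)) : G.IsProfile fun _ => G.retaliation ρ punish := by
  intro i h hhist _
  change G.E (G.lastV h) (G.retaliation ρ punish h)
  by_cases hfirst : firstDeviation ρ h = h.length
  · obtain ⟨n, hn⟩ : ∃ n, h.length = n + 1 :=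
      Nat.exists_eq_add_one.2 (List.length_pos_iff.2 hhist.1)
    have hlast : G.lastV h = ρ n := by
      have hget := (firstDeviation_eq_iff.1 hfirst).2 n (by lia)
      rw [lastV, List.getLastD_eq_getLast?, List.getLast?_eq_getElem?, hn, Nat.add_sub_cancel, hget,
        Option.getD_some]
    rw [retaliation, if_pos hfirst, hlast, hn]
    exact hρ.2 n
  · rw [retaliation, if_neg hfirst]
    exact hpunish _ _

theorem outcome_retaliation {ρ : ℕ → V} {punish : P → V → V} (h0 : ρ 0 = G.v0) :
    G.outcome (fun _ => G.retaliation ρ punish) = ρ :=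
  funext fun n => G.outcome_eq_of_forall_lt h0
    (fun _ _ => retaliation_playPrefix_of_agree fun _ _ => rfl) n le_rfl

theorem exists_first_ne {ρ π : ℕ → V} (h0 : π 0 = ρ 0) {l : ℕ} (hl : π l ≠ ρ l) :
    ∃ c < l, (∀ d ≤ c, π d = ρ d) ∧ π (c + 1) ≠ ρ (c + 1) := by
  classical
  have hex : ∃ d, π d ≠ ρ d := ⟨l, hl⟩
  obtain ⟨c, hc⟩ : ∃ c, Nat.find hex = c + 1 :=
    Nat.exists_eq_add_one.2 ((Nat.find_pos hex).2 (not_not.2 h0))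
  obtain ⟨hne, hagree⟩ := (Nat.find_eq_iff hex).1 hc
  exact ⟨c, hc.symm.trans_le (Nat.find_min' hex hl),
    fun d hd => not_not.1 (hagree d (Nat.lt_succ_of_le hd)), hne⟩

theorem mem_attractor_of_deviation {ρ π : ℕ → V} {punish : P → V → V} {j : P} {c m : ℕ}
    (hdelay : ∀ v n, punish j v ∈ G.attractor j n → v ∈ G.attractor j (n + 1))
    (hE : ∀ i, G.E (π i) (π (i + 1)))
    (hfollow : ∀ i, G.owner (π i) ≠ j → π (i + 1) = G.retaliation ρ punish (playPrefix π i))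
    (hagree : ∀ d ≤ c, π d = ρ d) (hne : π (c + 1) ≠ ρ (c + 1)) (hgoal : π (c + m) ∈ G.goal j) :
    π c ∈ G.attractor j m := by
  have hdeviator : G.owner (π c) = j := by
    by_contra hother
    exact hne ((hfollow c hother).trans (retaliation_playPrefix_of_agree hagree))
  refine G.mem_attractor_of_mem_goal_add (fun i hi n hn => ?_) hgoal
  by_cases howner : G.owner (π i) = j
  · exact Or.inr (Or.inl ⟨howner, _, hE i, hn⟩)
  · have hci : c ≠ i := fun h => howner (h ▸ hdeviator)
    rw [hfollow i howner, retaliation_playPrefix_of_ne (lt_of_le_of_ne hi hci) hagree hne,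
      ← hagree c le_rfl, hdeviator] at hn
    exact hdelay _ n hn

theorem IsUnimprovable.exists_isNash [DecidableEq P] {ρ : ℕ → V} (hρ : G.IsUnimprovable ρ)
    (hfin : ∀ v, {w | G.E v w}.Finite) :
    ∃ τ, G.IsProfile τ ∧ G.IsNash τ ∧ G.outcome τ = ρ := by
  choose punish hpunish hdelay using
    fun j v => G.exists_edge_forall_mem_attractor_succ j (hfin v)
  have hprof : G.IsProfile fun _ => G.retaliation ρ punish :=
    isProfile_retaliation hρ.isPlay hpunish
  refine ⟨_, hprof, fun j σ hσ => ?_, outcome_retaliation hρ.isPlay.1⟩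
  rw [outcome_retaliation hρ.isPlay.1, cost_le_cost_iff]
  rintro n ⟨l, hln, hgoal⟩
  refine G.visitedBy_mono ρ hln ?_
  set π := G.outcome (Function.update (fun _ => G.retaliation ρ punish) j σ) with hπ
  have hplay : G.IsPlay π := G.isPlay_outcome (G.isProfile_update hprof hσ)
  have hfollow : ∀ i, G.owner (π i) ≠ j →
      π (i + 1) = G.retaliation ρ punish (playPrefix π i) := fun i howner => by
    rw [hπ, outcome_succ, ← hπ, Function.update_of_ne howner]
  by_cases hl : π l = ρ l
  · exact ⟨l, le_rfl, hl ▸ hgoal⟩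
  obtain ⟨c, hcl, hagree, hne⟩ := exists_first_ne (hplay.1.trans hρ.isPlay.1.symm) hl
  obtain ⟨m, rfl⟩ := Nat.exists_eq_add_of_le hcl.le
  refine hρ.mem_visitedBy j c m ?_
  rw [← hagree c le_rfl]
  exact mem_attractor_of_deviation (hdelay j) hplay.2 hfollow hagree hne hgoal

/-! ### Shortening a play -/

variable (G) in
/-- A reindexing `f` of `ρ` such that `ρ ∘ f` takes the same steps as `ρ`, and a goal set that `ρ`
visits within `n` steps after time `f k`, or before, is visited by `ρ ∘ f` within `n` steps after
time `k`, or before. -/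
structure IsTimelyReindexing (ρ : ℕ → V) (f : ℕ → ℕ) : Prop where
  zero : ρ (f 0) = ρ 0
  succ : ∀ k, ρ (f (k + 1)) = ρ (f k + 1)
  visitedBy_subset : ∀ k n, G.visitedBy ρ (f k + n) ⊆ G.visitedBy (ρ ∘ f) (k + n)

theorem IsTimelyReindexing.isUnimprovable_comp {ρ : ℕ → V} {f : ℕ → ℕ}
    (hf : G.IsTimelyReindexing ρ f) (hρ : G.IsUnimprovable ρ) : G.IsUnimprovable (ρ ∘ f) where
  isPlay := ⟨hf.zero.trans hρ.isPlay.1, fun k => by simpa [hf.succ k] using hρ.isPlay.2 (f k)⟩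
  mem_visitedBy j k n hk := hf.visitedBy_subset k n (hρ.mem_visitedBy j (f k) n hk)

theorem IsTimelyReindexing.visited_comp {ρ : ℕ → V} {f : ℕ → ℕ}
    (hf : G.IsTimelyReindexing ρ f) : G.visited (ρ ∘ f) = G.visited ρ := by
  refine Set.Subset.antisymm (fun j ⟨l, hgoal⟩ => ⟨f l, hgoal⟩) fun j ⟨l, hgoal⟩ => ?_
  exact G.visitedBy_subset_visited _ _ (hf.visitedBy_subset 0 l ⟨l, Nat.le_add_left l _, hgoal⟩)

theorem isTimelyReindexing_skip {ρ : ℕ → V} {a p : ℕ} (hcycle : ρ (a + p) = ρ a)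
    (hvisit : G.visitedBy ρ (a + p) = G.visitedBy ρ a) :
    G.IsTimelyReindexing ρ fun k => if k < a then k else k + p := by
  set f : ℕ → ℕ := fun k => if k < a then k else k + p with hf
  have hlow : ∀ k ≤ a, ρ (f k) = ρ k := by
    intro k hk
    rcases hk.lt_or_eq with hlt | rfl
    · simp only [hf, if_pos hlt]
    · simpa [hf] using hcycle
  have hhigh : ∀ k ≥ a, f k = k + p := fun k hk => if_neg hk.not_gt
  refine ⟨hlow 0 a.zero_le, fun k => ?_, fun k n j ⟨l, hl, hgoal⟩ => ?_⟩
  · rcases lt_or_ge k a with hk | hk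
    · rw [hlow (k + 1) hk]
      simp only [hf, if_pos hk]
    · rw [hhigh k hk, hhigh (k + 1) (by lia), add_right_comm]
  have hlate : l ≤ k + n + p ∧ (l ≤ k + n ∨ a ≤ k) := by
    simp only [hf] at hl
    split_ifs at hl <;> lia
  rcases lt_or_ge (a + p) l with hafter | hbefore
  · refine ⟨l - p, by lia, ?_⟩
    rwa [Function.comp_apply, hhigh _ (by lia), Nat.sub_add_cancel (by lia)]
  rcases lt_or_ge l a with hla | hla
  · exact ⟨l, by lia, by rwa [Function.comp_apply, hlow l hla.le]⟩
  · obtain ⟨l', hl', hgoal'⟩ : j ∈ G.visitedBy ρ a := hvisit ▸ ⟨l, hbefore, hgoal⟩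
    exact ⟨l', by lia, by rwa [Function.comp_apply, hlow l' hl']⟩

theorem lt_card_mul_card_of_forall_visitedBy_ne [Fintype P] [Fintype V] {ρ : ℕ → V} {N : ℕ}
    (hcycle : ∀ a b, a < b → b < N → ρ a = ρ b → G.visitedBy ρ a ≠ G.visitedBy ρ b)
    (hpending : ∀ k < N, G.visitedBy ρ k ≠ G.visited ρ) :
    N < Fintype.card P * Fintype.card V := by
  have hcard : 0 < Fintype.card P := Fintype.card_pos_iff.2 ⟨G.owner G.v0⟩
  rcases N.eq_zero_or_pos with rfl | hN
  · exact Nat.mul_pos hcard (Fintype.card_pos_iff.2 ⟨G.v0⟩)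
  have hlt : ∀ k : Fin N, (G.visitedBy ρ k).ncard < Fintype.card P := by
    intro k
    rw [← Nat.card_eq_fintype_card]
    refine Set.ncard_lt_card fun huniv => hpending k k.2 ?_
    exact (G.visitedBy_subset_visited ρ k).antisymm (huniv ▸ Set.subset_univ _)
  let state : Fin N → Fin (Fintype.card P) × V := fun k => (⟨_, hlt k⟩, ρ k)
  have hinj : Function.Injective state := by
    refine Function.Injective.of_lt_imp_ne fun a b hab hstate => ?_
    obtain ⟨hncard, hvertex⟩ := Prod.ext_iff.1 hstate
    exact hcycle a b hab b.2 hvertex (Set.eq_of_subset_of_ncard_le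
      (G.visitedBy_mono ρ (Fin.le_def.1 hab.le)) (Fin.ext_iff.1 hncard).ge)
  -- No goal vertex is ever paired with the count `0`; this makes the bound strict.
  obtain ⟨j, ⟨l, hgoal⟩, -⟩ := Set.exists_of_ssubset
    ((G.visitedBy_subset_visited ρ 0).ssubset_of_ne (hpending 0 hN))
  have hmissed : (⟨0, hcard⟩, ρ l) ∉ Set.range state := by
    rintro ⟨k, hk⟩
    obtain ⟨hzero, hvertex : ρ k = ρ l⟩ := Prod.ext_iff.1 hk
    have hempty : G.visitedBy ρ k = ∅ := (Set.ncard_eq_zero).1 (Fin.ext_iff.1 hzero)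
    exact Set.eq_empty_iff_forall_notMem.1 hempty j ⟨k, le_rfl, hvertex ▸ hgoal⟩
  simpa using Fintype.card_lt_of_injective_of_notMem state hinj hmissed

theorem IsUnimprovable.exists_visitedBy_eq_visited_lt [Fintype P] [Fintype V] {ρ : ℕ → V}
    (hρ : G.IsUnimprovable ρ) :
    ∃ π N, G.IsUnimprovable π ∧ G.visited π = G.visited ρ ∧ G.visitedBy π N = G.visited π ∧
      N < Fintype.card P * Fintype.card V := by
  classical
  have hex : ∃ N π, G.IsUnimprovable π ∧ G.visited π = G.visited ρ ∧
      G.visitedBy π N = G.visited π :=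
    let ⟨N, hN⟩ := G.exists_visitedBy_eq_visited ρ
    ⟨N, ρ, hρ, rfl, hN⟩
  obtain ⟨π, hπ, htype, hN⟩ := Nat.find_spec hex
  have hmin := fun M => Nat.find_min hex (m := M)
  generalize Nat.find hex = N at hN hmin
  refine ⟨π, N, hπ, htype, hN, lt_card_mul_card_of_forall_visitedBy_ne ?_
    fun k hk hdone => hmin k hk ⟨π, hπ, htype, hdone⟩⟩
  intro a b hab hbN hvertex hvisit
  obtain ⟨p, rfl⟩ := Nat.exists_eq_add_of_le hab.le
  have hskip := isTimelyReindexing_skip hvertex.symm hvisit.symm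
  refine hmin (N - p) (by lia) ⟨_, hskip.isUnimprovable_comp hπ, hskip.visited_comp.trans htype,
    (G.visitedBy_subset_visited _ _).antisymm ?_⟩
  have hsubset := hskip.visitedBy_subset a (N - (a + p))
  rw [if_neg (lt_irrefl a), Nat.add_sub_cancel' hbN.le, hN] at hsubset
  rwa [hskip.visited_comp, show N - p = a + (N - (a + p)) by lia]

/-! ### Closing a play into a lasso -/

theorem isTimelyReindexing_loop {ρ : ℕ → V} {s p : ℕ} (hp : 0 < p) (hcycle : ρ (s + p) = ρ s)
    (hvisit : G.visitedBy ρ s = G.visited ρ) :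
    G.IsTimelyReindexing ρ fun k => min k s + (k - s) % p := by
  have hlow : ∀ k ≤ s, min k s + (k - s) % p = k := fun k hk => by
    simp [hk, Nat.sub_eq_zero_of_le hk]
  refine ⟨by rw [hlow 0 s.zero_le], fun k => ?_, fun k n j ⟨l, hl, hgoal⟩ => ?_⟩
  · rcases lt_or_ge k s with hk | hk
    · rw [hlow k hk.le, hlow (k + 1) hk]
    · obtain ⟨m, rfl⟩ := Nat.exists_eq_add_of_le hk
      have hmod := Nat.mod_lt m hp
      rw [min_eq_right (by lia), min_eq_right hk, Nat.add_sub_cancel_left, add_assoc s m 1,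
        Nat.add_sub_cancel_left, ← Nat.mod_add_mod, add_assoc s]
      rcases (Nat.succ_le_of_lt hmod).lt_or_eq with hlt | hwrap
      · rw [Nat.mod_eq_of_lt hlt]
      · rw [← Nat.succ_eq_add_one, hwrap, Nat.mod_self, add_zero, hcycle]
  · have hle := Nat.mod_le (k - s) p
    obtain ⟨l', hl's, hl'l, hgoal'⟩ : ∃ l' ≤ s, l' ≤ l ∧ ρ l' ∈ G.goal j := by
      rcases le_total l s with hls | hsl
      · exact ⟨l, hls, le_rfl, hgoal⟩
      · obtain ⟨l', hl's, hgoal'⟩ : j ∈ G.visitedBy ρ s := hvisit ▸ ⟨l, hgoal⟩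
        exact ⟨l', hl's, hl's.trans hsl, hgoal'⟩
    exact ⟨l', by lia, by simpa only [Function.comp_apply, hlow l' hl's] using hgoal'⟩

theorem exists_cycle_le_add_card [Fintype V] (ρ : ℕ → V) (N : ℕ) :
    ∃ s p, N ≤ s ∧ 0 < p ∧ s + p ≤ N + Fintype.card V ∧ ρ (s + p) = ρ s := by
  obtain ⟨a, ha, b, hb, hab, heq⟩ := Finset.exists_ne_map_eq_of_card_lt_of_maps_to
    (s := Finset.Icc N (N + Fintype.card V)) (t := Finset.univ) (f := ρ)
    (by simp only [Finset.card_univ, Nat.card_Icc]; lia) (fun _ _ => Finset.mem_univ _)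
  rw [Finset.mem_Icc] at ha hb
  wlog hlt : a < b generalizing a b
  · exact this b hb a ha hab.symm heq.symm (by lia)
  exact ⟨a, b - a, ha.1, by lia, by lia, by rw [Nat.add_sub_cancel' hlt.le, heq]⟩

theorem IsUnimprovable.exists_eventually_periodic [Fintype V] {ρ : ℕ → V} {N : ℕ}
    (hρ : G.IsUnimprovable ρ) (hN : G.visitedBy ρ N = G.visited ρ) :
    ∃ π s p, G.IsUnimprovable π ∧ G.visited π = G.visited ρ ∧ G.visitedBy π s = G.visited π ∧
      0 < p ∧ s + p ≤ N + Fintype.card V ∧ ∀ k ≥ s, π (k + p) = π k := by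
  obtain ⟨s, p, hNs, hp, hle, hcycle⟩ := exists_cycle_le_add_card ρ N
  have hs : G.visitedBy ρ s = G.visited ρ :=
    (G.visitedBy_subset_visited ρ s).antisymm (hN ▸ G.visitedBy_mono ρ hNs)
  have hloop := isTimelyReindexing_loop hp hcycle hs
  refine ⟨_, s, p, hloop.isUnimprovable_comp hρ, hloop.visited_comp,
    (G.visitedBy_subset_visited _ s).antisymm ?_, hp, hle, fun k hk => ?_⟩
  · simpa [hloop.visited_comp, hs] using hloop.visitedBy_subset 0 s
  · simp [hk, Nat.le_add_right_of_le hk, Nat.sub_add_comm hk]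

theorem eq_ite_getD_of_eventually_periodic {π : ℕ → V} {s p : ℕ} (hp : 0 < p)
    (hπ : ∀ k ≥ s, π (k + p) = π k) (v : V) (k : ℕ) :
    π k = if k < s + 1 then (playPrefix π s).getD k v
      else ((List.range p).map fun i => π (s + 1 + i)).getD ((k - (s + 1)) % p) v := by
  split_ifs with hk
  · rw [List.getD_eq_getElem?_getD, getElem?_playPrefix_of_le π (by lia), Option.getD_some]
  · have hperiodic : Function.Periodic (fun i => π (s + 1 + i)) p :=
      fun i => by simpa only [add_assoc] using hπ (s + 1 + i) (by lia)
    have hmod := hperiodic.map_mod_nat (k - (s + 1))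
    rw [Nat.add_sub_cancel' (by lia)] at hmod
    simp [Nat.mod_lt _ hp, hmod]

end ReachGame

/-- From any Nash equilibrium `(σᵢ)` of `G` one can build a Nash
equilibrium `(τᵢ)` of the same type whose outcome has the form `αβ^ω`, where
`Visit(α)` equals the type of `(σᵢ)` and `|αβ| < (|Π|+1)·|V|` (length in edges). -/
theorem nash_to_lasso_nash {P V : Type} [Fintype P] [DecidableEq P] [Fintype V]
    (G : ReachGame P V)
    (prof : P → List V → V) (hprof : G.IsProfile prof) (hnash : G.IsNash prof) :
    ∃ (τ : P → List V → V) (α β : List V),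
      G.IsProfile τ ∧ G.IsNash τ ∧
      α ≠ [] ∧ β ≠ [] ∧
      G.visitL α = G.typeOf prof ∧
      G.typeOf τ = G.typeOf prof ∧
      (α ++ β).length - 1 < (Fintype.card P + 1) * Fintype.card V ∧
      (∀ k : ℕ, G.outcome τ k =
        if k < α.length then α.getD k G.v0
        else β.getD ((k - α.length) % β.length) G.v0) := by
  obtain ⟨ρ, N, hρ, htype, hN, hlt⟩ :=
    (hnash.isUnimprovable_outcome hprof).exists_visitedBy_eq_visited_lt
  obtain ⟨π, s, p, hπ, htype', hs, hp, hle, hperiodic⟩ := hρ.exists_eventually_periodic hN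
  obtain ⟨τ, hτ, hτnash, hout⟩ := hπ.exists_isNash fun _ => Set.toFinite _
  have htypeπ : G.visited π = G.typeOf prof := htype'.trans htype
  refine ⟨τ, ReachGame.playPrefix π s, (List.range p).map fun i => π (s + 1 + i), hτ, hτnash,
    by simp [ReachGame.playPrefix], by simpa using hp.ne', ?_, ?_, ?_, ?_⟩
  · rw [G.visitL_playPrefix, hs, htypeπ]
  · rw [← htypeπ, ← hout]
    rfl
  · simp only [List.length_append, ReachGame.length_playPrefix, List.length_map, List.length_range]
    lia
  · simpa [hout] using ReachGame.eq_ite_getD_of_eventually_periodic hp hperiodic G.v0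
end
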